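/- Every connected weighted graph G on n vertices admits a subgraph H with at most C·n^{7/5}·log n edges (for a universal constant C) such that d_H(s,t) ≤ d_G(s,t) + 4·W(s,t) for every pair of vertices s,t ∈ V. -/

import Mathlib

open scoped ENNReal Classical

/-- The total weight of a walk: the sum of the weights of its edges. -/
noncomputable def walkWeight {V : Type} (G : SimpleGraph V) (w : Sym2 V → ℝ≥0∞)
    {s t : V} (p : G.Walk s t) : ℝ≥0∞ :=
  (p.edges.map w).sum

/-- Shortest-path distance in the weighted graph `(G, w)`, equal to `⊤` if there is no path. -/
noncomputable def gdist {V : Type} (G : SimpleGraph V) (w : Sym2 V → ℝ≥0∞)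
    (s t : V) : ℝ≥0∞ :=
  ⨅ p : G.Walk s t, walkWeight G w p

/-- The maximum edge weight along a walk (0 for the trivial walk). -/
noncomputable def maxEdge {V : Type} (G : SimpleGraph V) (w : Sym2 V → ℝ≥0∞)
    {s t : V} (p : G.Walk s t) : ℝ≥0∞ :=
  (p.edges.map w).foldr max 0

/-- `π` assigns to each ordered vertex pair a shortest path: a walk whose total
weight equals the shortest-path distance. -/
def IsShortestPathScheme {V : Type} (G : SimpleGraph V) (w : Sym2 V → ℝ≥0∞)
    (π : (s t : V) → G.Walk s t) : Prop :=
  ∀ s t : V, walkWeight G w (π s t) = gdist G w s t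

/-- The edge weights are positive and finite on all edges of `G`. -/
def PosWeights {V : Type} (G : SimpleGraph V) (w : Sym2 V → ℝ≥0∞) : Prop :=
  ∀ e ∈ G.edgeSet, 0 < w e ∧ w e ≠ ⊤

/-!
Every vertex keeps its `d` lightest edges; the other edges of `G` are called missing. The edges kept
at an endpoint of a missing edge are at least as light as it, so a shortest path with at least
`3 * l` missing edges has `d * l` hubs: vertices through which a detour costs at most `2 W`.
Shortest-path trees rooted at a small random set of vertices serve all such paths at once.

A path with fewer missing edges is left at its first and its last missing edge for light neighbours
`a` and `b` in a second random set `R`, at a cost of at most `W` for each of the four crossings.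
For each pair in `R` it is enough to add the at most `3 * l` missing edges of one cheapest path.
-/

section FiniteSets

lemma exists_subset_card_eq_forall_le {α β : Type*} [LinearOrder β] (S : Finset α) (f : α → β)
    {d : ℕ} (hd : d ≤ S.card) :
    ∃ T ⊆ S, T.card = d ∧ ∀ x ∈ T, ∀ y ∈ S, y ∉ T → f x ≤ f y := by
  induction d with
  | zero => exact ⟨∅, by simp⟩
  | succ d ih =>
    obtain ⟨T, hTS, rfl, hT⟩ := ih (by omega)
    obtain ⟨m, hm, hmin⟩ := (S \ T).exists_min_image f
      (Finset.sdiff_nonempty.2 fun h => by have := Finset.card_le_card h; omega)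
    obtain ⟨hmS, hmT⟩ := Finset.mem_sdiff.1 hm
    refine ⟨insert m T, Finset.insert_subset hmS hTS, Finset.card_insert_of_notMem hmT, ?_⟩
    intro x hx y hyS hy
    obtain ⟨-, hyT⟩ := not_or.1 (Finset.mem_insert.not.1 hy)
    rcases Finset.mem_insert.1 hx with rfl | hx
    · exact hmin y (Finset.mem_sdiff.2 ⟨hyS, hyT⟩)
    · exact hT x hx y hyS hyT

/-- A union bound: each `S i` is missed by at most `(|α| - k) ^ m` of the `|α| ^ m` functions
`Fin m → α`, so the range of some function meets all of them. -/
lemma exists_hittingSet_of_card_mul_pow_lt {α ι : Type*} [Fintype α] (F : Finset ι)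
    (S : ι → Finset α) {k m : ℕ} (hS : ∀ i ∈ F, k ≤ (S i).card)
    (hF : F.card * (Fintype.card α - k) ^ m < Fintype.card α ^ m) :
    ∃ R : Finset α, R.card ≤ m ∧ ∀ i ∈ F, ∃ r ∈ R, r ∈ S i := by
  set missing : ι → Finset (Fin m → α) := fun i => Fintype.piFinset fun _ => (S i)ᶜ
  have hmissing : ∀ i ∈ F, (missing i).card ≤ (Fintype.card α - k) ^ m := fun i hi => by
    rw [Fintype.card_piFinset_const, Finset.card_compl]
    exact Nat.pow_le_pow_left (Nat.sub_le_sub_left (hS i hi) _) m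
  have hcard : (F.biUnion missing).card < (Finset.univ : Finset (Fin m → α)).card :=
    calc (F.biUnion missing).card ≤ F.card * (Fintype.card α - k) ^ m :=
          Finset.card_biUnion_le_card_mul _ _ _ hmissing
      _ < (Finset.univ : Finset (Fin m → α)).card := by simpa using hF
  obtain ⟨g, -, hg⟩ := Finset.exists_mem_notMem_of_card_lt_card hcard
  refine ⟨Finset.univ.image g, Finset.card_image_le.trans (by simp), fun i hi => ?_⟩
  simpa [missing] using fun h => hg (Finset.mem_biUnion.2 ⟨i, hi, h⟩)

lemma exists_hittingSet_of_card_lt_exp {α ι : Type*} [Fintype α] [Nonempty α] (F : Finset ι)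
    (S : ι → Finset α) {k m : ℕ} (hS : ∀ i ∈ F, k ≤ (S i).card)
    (hF : (F.card : ℝ) < Real.exp (k * m / Fintype.card α)) :
    ∃ R : Finset α, R.card ≤ m ∧ ∀ i ∈ F, ∃ r ∈ R, r ∈ S i := by
  apply exists_hittingSet_of_card_mul_pow_lt F S hS
  set n := Fintype.card α
  have hn : (0 : ℝ) < n := Nat.cast_pos.2 Fintype.card_pos
  have hsub : ((n - k : ℕ) : ℝ) ≤ n * Real.exp (-(k / n)) := by
    rcases le_total k n with hkn | hnk
    · calc ((n - k : ℕ) : ℝ) = n * (1 - k / n) := by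
            rw [Nat.cast_sub hkn]
            field_simp
        _ ≤ n * Real.exp (-(k / n)) := by gcongr; exact Real.one_sub_le_exp_neg _
    · rw [Nat.sub_eq_zero_of_le hnk, Nat.cast_zero]
      positivity
  have hbound : (F.card : ℝ) * ((n - k : ℕ) : ℝ) ^ m < (n : ℝ) ^ m :=
    calc (F.card : ℝ) * ((n - k : ℕ) : ℝ) ^ m
        ≤ F.card * (n * Real.exp (-(k / n))) ^ m := by gcongr
      _ = F.card * Real.exp (-(k * m / n)) * (n : ℝ) ^ m := by
          rw [mul_pow, ← Real.exp_nat_mul]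
          ring_nf
      _ < Real.exp (k * m / n) * Real.exp (-(k * m / n)) * (n : ℝ) ^ m := by gcongr
      _ = (n : ℝ) ^ m := by rw [← Real.exp_add, add_neg_cancel, Real.exp_zero, one_mul]
  exact_mod_cast hbound

end FiniteSets

section WalkWeight

variable {V : Type} {G H : SimpleGraph V} {w : Sym2 V → ℝ≥0∞} {r s t u v : V}

@[simp]
lemma walkWeight_nil : walkWeight G w (.nil : G.Walk s s) = 0 := by
  simp [walkWeight]

@[simp]
lemma walkWeight_cons (h : G.Adj s u) (p : G.Walk u t) :
    walkWeight G w (.cons h p) = w s(s, u) + walkWeight G w p := by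
  simp [walkWeight]

@[simp]
lemma walkWeight_append (p : G.Walk s u) (q : G.Walk u t) :
    walkWeight G w (p.append q) = walkWeight G w p + walkWeight G w q := by
  simp [walkWeight]

lemma walkWeight_reverse (p : G.Walk s t) : walkWeight G w p.reverse = walkWeight G w p := by
  simp [walkWeight, List.sum_reverse]

lemma walkWeight_bypass_le (p : G.Walk s t) : walkWeight G w p.bypass ≤ walkWeight G w p :=
  (p.edges_bypass_sublist_edges.map w).sum_le_sum fun _ _ => zero_le

lemma walkWeight_take_add_drop (p : G.Walk s t) {k : ℕ} (hk : k < p.length) :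
    walkWeight G w (p.take k) +
      (w s(p.getVert k, p.getVert (k + 1)) + walkWeight G w (p.drop (k + 1))) =
        walkWeight G w p := by
  have hk' : k < p.edges.length := by rwa [p.length_edges]
  simp only [walkWeight, SimpleGraph.Walk.edges_take, SimpleGraph.Walk.edges_drop]
  rw [← p.getElem_edges hk', ← List.sum_cons, ← List.map_cons, ← List.sum_append,
    ← List.map_append, ← List.drop_eq_getElem_cons hk', List.take_append_drop]

lemma walkWeight_ne_top (hw : PosWeights G w) (p : G.Walk s t) : walkWeight G w p ≠ ⊤ := by
  induction p with
  | nil => simp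
  | cons h p ih =>
    rw [walkWeight_cons]
    exact ENNReal.add_ne_top.2 ⟨(hw _ h).2, ih⟩

lemma weight_le_maxEdge (p : G.Walk s t) {e : Sym2 V} (he : e ∈ p.edges) :
    w e ≤ maxEdge G w p := by
  unfold maxEdge
  generalize p.edges = l at he
  induction l with
  | nil => simp at he
  | cons a l ih =>
    rw [List.map_cons, List.foldr_cons]
    rcases List.mem_cons.1 he with rfl | he
    · exact le_max_left _ _
    · exact (ih he).trans (le_max_right _ _)

lemma gdist_le_walkWeight (p : G.Walk s t) : gdist G w s t ≤ walkWeight G w p :=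
  iInf_le _ p

lemma gdist_le_walkWeight_of_edges_subset (p : G.Walk s t) (h : ∀ e ∈ p.edges, e ∈ H.edgeSet) :
    gdist H w s t ≤ walkWeight G w p :=
  (gdist_le_walkWeight (p.transfer H h)).trans_eq (by simp [walkWeight])

lemma gdist_anti (h : G ≤ H) : gdist H w s t ≤ gdist G w s t :=
  le_iInf fun p => gdist_le_walkWeight_of_edges_subset p fun _ he =>
    SimpleGraph.edgeSet_mono h (p.edges_subset_edgeSet he)

lemma gdist_self (s : V) : gdist G w s s = 0 :=
  nonpos_iff_eq_zero.1 ((gdist_le_walkWeight .nil).trans_eq walkWeight_nil)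

lemma gdist_le_weight (h : G.Adj s t) : gdist G w s t ≤ w s(s, t) :=
  (gdist_le_walkWeight h.toWalk).trans_eq (by simp)

lemma gdist_ne_top (hw : PosWeights G w) (p : G.Walk s t) : gdist G w s t ≠ ⊤ :=
  ne_top_of_le_ne_top (walkWeight_ne_top hw p) (gdist_le_walkWeight p)

lemma gdist_comm (s t : V) : gdist G w s t = gdist G w t s := by
  have hle (a b : V) : gdist G w a b ≤ gdist G w b a :=
    le_iInf fun p => (gdist_le_walkWeight p.reverse).trans_eq (walkWeight_reverse p)
  exact (hle s t).antisymm (hle t s)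

lemma gdist_triangle (s u t : V) : gdist G w s t ≤ gdist G w s u + gdist G w u t :=
  ENNReal.le_iInf_add_iInf fun p q =>
    (gdist_le_walkWeight (p.append q)).trans_eq (walkWeight_append p q)

end WalkWeight

section ShortestWalk

variable {V : Type} {G : SimpleGraph V} {w : Sym2 V → ℝ≥0∞} {r s t v : V}

/-- A walk is shortest if it realises the distance between its endpoints;
`IsShortestPathScheme G w π` says that every `π s t` is shortest. -/
def IsShortest (w : Sym2 V → ℝ≥0∞) (p : G.Walk s t) : Prop :=
  walkWeight G w p = gdist G w s t

lemma IsShortest.gdist_getVert_add_weight {p : G.Walk s t} (hp : IsShortest w p)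
    (hw : PosWeights G w) {k : ℕ} (hk : k < p.length) :
    gdist G w s (p.getVert k) + w s(p.getVert k, p.getVert (k + 1)) =
      gdist G w s (p.getVert (k + 1)) := by
  apply le_antisymm
  · have hsuffix := walkWeight_ne_top hw (p.drop (k + 1))
    rw [← ENNReal.add_le_add_iff_right hsuffix]
    calc gdist G w s (p.getVert k) + w s(p.getVert k, p.getVert (k + 1)) +
          walkWeight G w (p.drop (k + 1))
        ≤ walkWeight G w p := by
          rw [← walkWeight_take_add_drop p hk, add_assoc]
          gcongr
          exact gdist_le_walkWeight _
      _ ≤ gdist G w s (p.getVert (k + 1)) + gdist G w (p.getVert (k + 1)) t :=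
          hp.trans_le (gdist_triangle _ _ _)
      _ ≤ gdist G w s (p.getVert (k + 1)) + walkWeight G w (p.drop (k + 1)) := by
          gcongr
          exact gdist_le_walkWeight _
  · refine (gdist_triangle _ (p.getVert k) _).trans ?_
    gcongr
    exact gdist_le_weight (p.adj_getVert_succ hk)

lemma IsShortest.gdist_getVert_mono {p : G.Walk s t} (hp : IsShortest w p)
    (hw : PosWeights G w) {k l : ℕ} (hkl : k ≤ l) (hl : l ≤ p.length) :
    gdist G w s (p.getVert k) ≤ gdist G w s (p.getVert l) := by
  induction l, hkl using Nat.le_induction with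
  | base => rfl
  | succ l _ ih =>
    rw [← hp.gdist_getVert_add_weight hw hl]
    exact (ih (by omega)).trans le_self_add

/-- The strictness comes from the positive weight of the edge at position `m`. -/
lemma IsShortest.weight_add_weight_lt {p : G.Walk s t} (hp : IsShortest w p)
    (hw : PosWeights G w) {k i m j l : ℕ} (hki : k ≤ i) (him : i < m) (hmj : m < j) (hjl : j < l)
    (hl : l ≤ p.length) {x : V} (hkx : G.Adj (p.getVert k) x) (hlx : G.Adj (p.getVert l) x) :
    w s(p.getVert i, p.getVert (i + 1)) + w s(p.getVert j, p.getVert (j + 1)) <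
      w s(p.getVert k, x) + w s(p.getVert l, x) := by
  set D : ℕ → ℝ≥0∞ := fun a => gdist G w s (p.getVert a)
  set c : ℕ → ℝ≥0∞ := fun a => w s(p.getVert a, p.getVert (a + 1))
  have step {a b : ℕ} (hab : a < b) (hb : b ≤ p.length) : D a + c a ≤ D b :=
    (hp.gdist_getVert_add_weight hw (by omega)).trans_le (hp.gdist_getVert_mono hw hab hb)
  have hlong : D k + (c i + c m + c j) ≤ D l :=
    calc D k + (c i + c m + c j) ≤ D i + (c i + c m + c j) := by
          gcongr; exact hp.gdist_getVert_mono hw hki (by omega)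
      _ = D i + c i + c m + c j := by ring
      _ ≤ D m + c m + c j := by gcongr; exact step him (by omega)
      _ ≤ D j + c j := by gcongr; exact step hmj (by omega)
      _ ≤ D l := step hjl hl
  have hdetour : D l ≤ D k + (w s(p.getVert k, x) + w s(p.getVert l, x)) :=
    calc D l ≤ D k + gdist G w (p.getVert k) (p.getVert l) := gdist_triangle _ _ _
      _ ≤ D k + (gdist G w (p.getVert k) x + gdist G w (p.getVert l) x) := by
          gcongr
          rw [gdist_comm (p.getVert l)]
          exact gdist_triangle _ _ _
      _ ≤ _ := by gcongr <;> exact gdist_le_weight ‹_›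
  have hDk : D k ≠ ⊤ := gdist_ne_top hw (p.take k)
  have hc {a : ℕ} (ha : a < p.length) : 0 < c a ∧ c a ≠ ⊤ := hw _ (p.adj_getVert_succ ha)
  calc c i + c j < c i + c j + c m :=
        ENNReal.lt_add_right
          (ENNReal.add_ne_top.2 ⟨(hc (by omega)).2, (hc (by omega)).2⟩) (hc (by omega)).1.ne'
    _ = c i + c m + c j := by ring
    _ ≤ _ := (ENNReal.add_le_add_iff_left hDk).1 (hlong.trans hdetour)

lemma IsShortest.exists_parent {p : G.Walk r v} (hp : IsShortest w p) (hw : PosWeights G w)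
    (hv : v ≠ r) : ∃ u, G.Adj u v ∧ gdist G w r u + w s(u, v) = gdist G w r v := by
  obtain ⟨k, hk⟩ : ∃ k, p.length = k + 1 :=
    Nat.exists_eq_succ_of_ne_zero fun h => hv (p.eq_of_length_eq_zero h).symm
  have hlast : p.getVert (k + 1) = v := hk ▸ p.getVert_length
  refine ⟨p.getVert k, ?_, ?_⟩
  · simpa only [hlast] using p.adj_getVert_succ (i := k) (by omega)
  · simpa only [hlast] using hp.gdist_getVert_add_weight hw (k := k) (by omega)

lemma exists_shortestPathTree [Fintype V] (hw : PosWeights G w) (r : V)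
    (hr : ∀ v, ∃ p : G.Walk r v, IsShortest w p) :
    ∃ T ≤ G, T.edgeSet.ncard ≤ Fintype.card V ∧ ∀ v, gdist T w r v ≤ gdist G w r v := by
  have hparent (v : V) (hv : v ≠ r) :
      ∃ u, G.Adj u v ∧ gdist G w r u + w s(u, v) = gdist G w r v := by
    obtain ⟨p, hp⟩ := hr v
    exact hp.exists_parent hw hv
  choose! parent hadj hdist using hparent
  set T := SimpleGraph.fromEdgeSet ((fun v => s(parent v, v)) '' {v | v ≠ r})
  have hT {v : V} (hv : v ≠ r) : T.Adj (parent v) v :=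
    (SimpleGraph.fromEdgeSet_adj _).2 ⟨Set.mem_image_of_mem _ hv, (hadj v hv).ne⟩
  refine ⟨T, ?_, ?_, fun v => ?_⟩
  · rw [SimpleGraph.fromEdgeSet_le]
    rintro _ ⟨⟨v, hv, rfl⟩, -⟩
    exact hadj v hv
  · rw [SimpleGraph.edgeSet_fromEdgeSet, ← Nat.card_eq_fintype_card, ← Set.ncard_univ]
    calc _ ≤ _ := Set.ncard_le_ncard Set.sdiff_subset
      _ ≤ _ := Set.ncard_image_le
      _ ≤ _ := Set.ncard_le_ncard (Set.subset_univ _)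
  · have : IsTrans V (fun a b => gdist G w r a < gdist G w r b) := ⟨fun _ _ _ => lt_trans⟩
    have : Std.Irrefl (fun a b => gdist G w r a < gdist G w r b) := ⟨fun _ => lt_irrefl _⟩
    induction v using (Finite.wellFounded_of_trans_of_irrefl
      fun a b => gdist G w r a < gdist G w r b).induction with
    | _ v ih =>
      rcases eq_or_ne v r with rfl | hv
      · simp only [gdist_self, le_refl]
      · have hcloser : gdist G w r (parent v) < gdist G w r v := by
          obtain ⟨p, -⟩ := hr (parent v)
          rw [← hdist v hv]
          exact ENNReal.lt_add_right (gdist_ne_top hw p) (hw _ (hadj v hv)).1.ne'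
        calc gdist T w r v ≤ gdist T w r (parent v) + gdist T w (parent v) v :=
              gdist_triangle _ _ _
          _ ≤ gdist G w r (parent v) + w s(parent v, v) :=
              add_le_add (ih _ hcloser) (gdist_le_weight (hT hv))
          _ = gdist G w r v := hdist v hv

end ShortestWalk

section LightNeighbors

variable {V : Type} {G H : SimpleGraph V} {w : Sym2 V → ℝ≥0∞} {s t u v : V} {d : ℕ}
  {N : V → Finset V}

/-- `S` consists of `d` lightest neighbours of `v`, or of all neighbours of `v` if these are
fewer than `d`. -/
structure IsLightNeighborSet (G : SimpleGraph V) (w : Sym2 V → ℝ≥0∞) (d : ℕ) (v : V)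
    (S : Finset V) : Prop where
  adj : ∀ x ∈ S, G.Adj v x
  card_le : S.card ≤ d
  card_eq : ∀ u, G.Adj v u → u ∉ S → S.card = d
  weight_le : ∀ u, G.Adj v u → u ∉ S → ∀ x ∈ S, w s(v, x) ≤ w s(v, u)

lemma exists_isLightNeighborSet [Finite V] (G : SimpleGraph V) (w : Sym2 V → ℝ≥0∞) (d : ℕ)
    (v : V) : ∃ S, IsLightNeighborSet G w d v S := by
  have := Fintype.ofFinite V
  rcases le_total d (G.neighborFinset v).card with hd | hd
  · obtain ⟨S, hS, hcard, hle⟩ := exists_subset_card_eq_forall_le _ (fun x => w s(v, x)) hd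
    exact ⟨S, fun x hx => by simpa using hS hx, hcard.le, fun _ _ _ => hcard,
      fun u hu huS x hx => hle x hx u (by simpa using hu) huS⟩
  · refine ⟨G.neighborFinset v, by simp, hd, ?_, ?_⟩ <;>
      exact fun u hu huS => absurd ((G.mem_neighborFinset v u).2 hu) huS

/-- The `d`-light initialization of `G`: every vertex `v` keeps its edges to `N v`, which
in applications satisfies `IsLightNeighborSet`. -/
def lightGraph (N : V → Finset V) : SimpleGraph V :=
  SimpleGraph.fromRel fun v x => x ∈ N v

lemma lightGraph_le (hN : ∀ v, IsLightNeighborSet G w d v (N v)) : lightGraph N ≤ G := by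
  rintro v x ⟨-, hx | hv⟩
  · exact (hN v).adj x hx
  · exact ((hN x).adj v hv).symm

lemma IsLightNeighborSet.lightGraph_adj (hv : IsLightNeighborSet G w d v (N v)) {x : V}
    (hx : x ∈ N v) : (lightGraph N).Adj v x :=
  ⟨(hv.adj x hx).ne, .inl hx⟩

lemma ncard_edgeSet_lightGraph_le [Fintype V] (hN : ∀ v, (N v).card ≤ d) :
    (lightGraph N).edgeSet.ncard ≤ Fintype.card V * d := by
  have hsub : (lightGraph N).edgeSet ⊆
      ↑(Finset.univ.biUnion fun v => (N v).image fun x => s(v, x)) := by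
    rintro ⟨v, x⟩ ⟨-, hx | hv⟩
    · exact Finset.mem_coe.2 (Finset.mem_biUnion.2
        ⟨v, Finset.mem_univ v, Finset.mem_image.2 ⟨x, hx, rfl⟩⟩)
    · exact Finset.mem_coe.2 (Finset.mem_biUnion.2
        ⟨x, Finset.mem_univ x, Finset.mem_image.2 ⟨v, hv, Sym2.eq_swap⟩⟩)
  calc (lightGraph N).edgeSet.ncard
      ≤ (Finset.univ.biUnion fun v => (N v).image fun x => s(v, x)).card := by
        rw [← Set.ncard_coe_finset]
        exact Set.ncard_le_ncard hsub
    _ ≤ Fintype.card V * d :=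
        Finset.card_biUnion_le_card_mul _ _ _ fun v _ => Finset.card_image_le.trans (hN v)

lemma IsLightNeighborSet.heavy_of_not_lightGraph_adj (hv : IsLightNeighborSet G w d v (N v))
    (hadj : G.Adj v u) (hmissing : ¬(lightGraph N).Adj v u) :
    (N v).card = d ∧ ∀ x ∈ N v, w s(v, x) ≤ w s(v, u) :=
  have hu : u ∉ N v := fun hu => hmissing (hv.lightGraph_adj hu)
  ⟨hv.card_eq u hadj hu, hv.weight_le u hadj hu⟩

/-- Choose the endpoint of the lighter of the two edges that faces the other edge. -/
lemma exists_light_vertex_between_missing_edges (hN : ∀ v, IsLightNeighborSet G w d v (N v))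
    (p : G.Walk s t) {i j : ℕ} (hij : i < j) (hj : j < p.length)
    (hmi : s(p.getVert i, p.getVert (i + 1)) ∉ (lightGraph N).edgeSet)
    (hmj : s(p.getVert j, p.getVert (j + 1)) ∉ (lightGraph N).edgeSet) :
    ∃ k, i < k ∧ k ≤ j ∧ (N (p.getVert k)).card = d ∧ ∀ x ∈ N (p.getVert k),
      w s(p.getVert k, x) ≤ w s(p.getVert i, p.getVert (i + 1)) ∧
      w s(p.getVert k, x) ≤ w s(p.getVert j, p.getVert (j + 1)) := by
  rcases le_total (w s(p.getVert i, p.getVert (i + 1))) (w s(p.getVert j, p.getVert (j + 1)))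
    with hle | hle
  · rw [Sym2.eq_swap] at hmi hle ⊢
    obtain ⟨hcard, hlight⟩ := (hN _).heavy_of_not_lightGraph_adj
      (p.adj_getVert_succ (hij.trans hj)).symm hmi
    exact ⟨i + 1, by omega, hij, hcard, fun x hx => ⟨hlight x hx, (hlight x hx).trans hle⟩⟩
  · obtain ⟨hcard, hlight⟩ := (hN _).heavy_of_not_lightGraph_adj (p.adj_getVert_succ hj) hmj
    exact ⟨j, hij, le_rfl, hcard, fun x hx => ⟨(hlight x hx).trans hle, hlight x hx⟩⟩

lemma exists_orderEmbedding_missing_edges [Finite V] (E : SimpleGraph V) (p : G.Walk s t) {m : ℕ}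
    (hm : m ≤ (p.edgeSet \ E.edgeSet).ncard) :
    ∃ f : Fin m ↪o ℕ, ∀ i, f i < p.length ∧
      s(p.getVert (f i), p.getVert (f i + 1)) ∉ E.edgeSet := by
  set edge : ℕ → Sym2 V := fun k => s(p.getVert k, p.getVert (k + 1))
  set I := (Finset.range p.length).filter fun k => edge k ∉ E.edgeSet
  have hsub : p.edgeSet \ E.edgeSet ⊆ ↑(I.image edge) := by
    rintro ⟨u, v⟩ ⟨hp, hE⟩
    obtain ⟨k, hk, hek : edge k = s(u, v)⟩ := p.mk_mem_edges_iff_exists.1 hp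
    have hkE : edge k ∉ E.edgeSet := by rwa [hek]
    exact Finset.mem_coe.2 (Finset.mem_image.2
      ⟨k, Finset.mem_filter.2 ⟨Finset.mem_range.2 hk, hkE⟩, hek⟩)
  have hcard : m ≤ I.card :=
    calc m ≤ (I.image edge).card := by
          rw [← Set.ncard_coe_finset]
          exact hm.trans (Set.ncard_le_ncard hsub)
      _ ≤ I.card := Finset.card_image_le
  refine ⟨I.orderEmbOfCardLe hcard, fun i => ?_⟩
  simpa only [I, Finset.mem_filter, Finset.mem_range] using I.orderEmbOfCardLe_mem hcard i

/-- The vertices from which the walk `p` can be reached by a single edge of weight at most the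
maximum edge weight of `p`: routing via such a vertex is a cheap detour. -/
noncomputable def hubs [Fintype V] (w : Sym2 V → ℝ≥0∞) (p : G.Walk s t) : Finset V :=
  {x | ∃ u ∈ p.support, G.Adj u x ∧ w s(u, x) ≤ maxEdge G w p}

lemma gdist_add_gdist_le_of_mem_hubs [Fintype V] {p : G.Walk s t} {r : V} (hr : r ∈ hubs w p) :
    gdist G w s r + gdist G w r t ≤ walkWeight G w p + 2 * maxEdge G w p := by
  obtain ⟨u, hu, hadj, hle⟩ := (Finset.mem_filter.1 hr).2
  obtain ⟨p₁, p₂, hp⟩ := SimpleGraph.Walk.mem_support_iff_exists_append.1 hu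
  calc gdist G w s r + gdist G w r t
      ≤ (gdist G w s u + gdist G w u r) + (gdist G w r u + gdist G w u t) :=
        add_le_add (gdist_triangle _ _ _) (gdist_triangle _ _ _)
    _ ≤ (walkWeight G w p₁ + maxEdge G w p) + (maxEdge G w p + walkWeight G w p₂) := by
        have hur : gdist G w u r ≤ maxEdge G w p := (gdist_le_weight hadj).trans hle
        rw [gdist_comm r u]
        gcongr <;> exact gdist_le_walkWeight _
    _ = walkWeight G w p + 2 * maxEdge G w p := by
        rw [congrArg (walkWeight G w) hp, walkWeight_append]
        ring

/-- Group the missing edges into consecutive triples. Between the first two edges of each triple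
there is a vertex whose `d` light neighbours are at least as light as both edges, and the third
edge keeps the light neighbourhoods of different triples disjoint. -/
lemma IsShortest.mul_le_card_hubs [Fintype V] {p : G.Walk s t} (hp : IsShortest w p)
    (hw : PosWeights G w) (hN : ∀ v, IsLightNeighborSet G w d v (N v)) {q : ℕ}
    (hq : 3 * q ≤ (p.edgeSet \ (lightGraph N).edgeSet).ncard) : d * q ≤ (hubs w p).card := by
  obtain ⟨f, hf⟩ := exists_orderEmbedding_missing_edges _ p hq
  have hfmono {a b : ℕ} (hab : a < b) (hb : b < 3 * q) :
      f ⟨a, hab.trans hb⟩ < f ⟨b, hb⟩ := f.strictMono hab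
  have hlight (j : Fin q) := exists_light_vertex_between_missing_edges hN p
    (hfmono (Nat.lt_succ_self (3 * j)) (by omega)) (hf _).1 (hf _).2 (hf _).2
  choose k hfk hkf hcard hle using hlight
  have hklen (j : Fin q) : k j < p.length := (hkf j).trans_lt (hf _).1
  have hdisj : Pairwise (Function.onFun Disjoint fun j => N (p.getVert (k j))) := by
    rw [pairwise_disjoint_on]
    intro i j hij
    refine Finset.disjoint_left.2 fun x hxi hxj => ?_
    refine (hp.weight_add_weight_lt hw (hkf i) (hfmono (b := 3 * i + 2) ?_ ?_)
      (hfmono (b := 3 * j) ?_ ?_) (hfk j) (hklen j).le ((hN _).adj x hxi)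
      ((hN _).adj x hxj)).not_ge (add_le_add (hle i x hxi).2 (hle j x hxj).1)
    all_goals have := Fin.lt_def.1 hij; omega
  have hsub : (Finset.univ.biUnion fun j => N (p.getVert (k j))) ⊆ hubs w p := by
    refine Finset.biUnion_subset.2 fun j _ x hx => Finset.mem_filter.2 ⟨Finset.mem_univ _, ?_⟩
    exact ⟨_, p.getVert_mem_support _, (hN _).adj x hx, (hle j x hx).1.trans
      (weight_le_maxEdge p (p.mk_mem_edges_iff_exists.2 ⟨_, (hf _).1, rfl⟩))⟩
  calc d * q = ∑ j, (N (p.getVert (k j))).card := by simp [hcard, mul_comm]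
    _ = (Finset.univ.biUnion fun j => N (p.getVert (k j))).card :=
        (Finset.card_biUnion (hdisj.set_pairwise _)).symm
    _ ≤ (hubs w p).card := Finset.card_le_card hsub

end LightNeighbors

section SparseWalks

variable {V : Type} {G H E : SimpleGraph V} {w : Sym2 V → ℝ≥0∞} {s t : V} {d k L : ℕ}
  {N : V → Finset V}

lemma ncard_edgeSet_finsetSup_le [Finite V] {ι : Type*} (s : Finset ι) (K : ι → SimpleGraph V)
    (hK : ∀ i ∈ s, (K i).edgeSet.ncard ≤ k) : (s.sup K).edgeSet.ncard ≤ s.card * k := by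
  induction s using Finset.cons_induction with
  | empty => simp
  | cons i s hi ih =>
    rw [Finset.sup_cons, SimpleGraph.edgeSet_sup, Finset.card_cons, Nat.succ_mul, Nat.add_comm]
    exact (Set.ncard_union_le _ _).trans (add_le_add (hK i (Finset.mem_cons_self i s))
      (ih fun j hj => hK j (Finset.mem_cons_of_mem hj)))

/-- Keep the missing edges of a cheapest path among those that miss at most `L` edges of `E`. -/
lemma exists_sparse_preserver [Finite V] (G E : SimpleGraph V) (w : Sym2 V → ℝ≥0∞) (L : ℕ)
    (a b : V) :
    ∃ B ≤ G, B.edgeSet.ncard ≤ L ∧ ∀ p : G.Walk a b, (p.edgeSet \ E.edgeSet).ncard ≤ L →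
      gdist (E ⊔ B) w a b ≤ walkWeight G w p := by
  have := Fintype.ofFinite V
  set P : Finset (G.Path a b) := {q | (q.1.edgeSet \ E.edgeSet).ncard ≤ L}
  have hbypass (p : G.Walk a b) (hp : (p.edgeSet \ E.edgeSet).ncard ≤ L) : p.toPath ∈ P :=
    Finset.mem_filter.2 ⟨Finset.mem_univ _, le_trans (Set.ncard_le_ncard
      (Set.sdiff_subset_sdiff_left p.edges_bypass_subset_edges)) hp⟩
  rcases P.eq_empty_or_nonempty with hP | hP
  · exact ⟨⊥, bot_le, by simp, fun p hp => by simpa [hP] using hbypass p hp⟩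
  obtain ⟨q, hq, hmin⟩ := P.exists_min_image (fun q => walkWeight G w q.1) hP
  set B := SimpleGraph.fromEdgeSet (q.1.edgeSet \ E.edgeSet)
  refine ⟨B, ?_, ?_, fun p hp => ?_⟩
  · rw [SimpleGraph.fromEdgeSet_le]
    exact fun e he => q.1.edges_subset_edgeSet he.1.1
  · rw [SimpleGraph.edgeSet_fromEdgeSet]
    exact (Set.ncard_le_ncard Set.sdiff_subset).trans (Finset.mem_filter.1 hq).2
  · have hqEB : ∀ e ∈ q.1.edges, e ∈ (E ⊔ B).edgeSet := fun e he => by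
      rw [SimpleGraph.edgeSet_sup, SimpleGraph.edgeSet_fromEdgeSet]
      by_cases heE : e ∈ E.edgeSet
      · exact .inl heE
      · exact .inr ⟨⟨he, heE⟩, G.not_isDiag_of_mem_edgeSet (q.1.edges_subset_edgeSet he)⟩
    calc gdist (E ⊔ B) w a b ≤ walkWeight G w q.1 := gdist_le_walkWeight_of_edges_subset _ hqEB
      _ ≤ walkWeight G w p.bypass := hmin _ (hbypass p hp)
      _ ≤ walkWeight G w p := walkWeight_bypass_le p

lemma exists_append_of_missing_edge (E : SimpleGraph V) (p : G.Walk s t)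
    (hp : ∃ e ∈ p.edges, e ∉ E.edgeSet) :
    ∃ (u : V) (q : G.Walk s u) (r : G.Walk u t), p = q.append r ∧
      (∀ e ∈ q.edges, e ∈ E.edgeSet) ∧ ∃ x, s(u, x) ∈ r.edges ∧ s(u, x) ∉ E.edgeSet := by
  induction p with
  | nil => simp at hp
  | @cons s u t h p ih =>
    by_cases hE : s(s, u) ∈ E.edgeSet
    · obtain ⟨v, q, r, rfl, hq, hr⟩ := ih (by simpa [hE] using hp)
      exact ⟨v, .cons h q, r, rfl, by simpa [hE] using hq, hr⟩
    · exact ⟨s, .nil, .cons h p, rfl, by simp, u, by simp, hE⟩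

lemma exists_append_append_of_missing_edge (E : SimpleGraph V) (p : G.Walk s t)
    (hp : ∃ e ∈ p.edges, e ∉ E.edgeSet) :
    ∃ (u v : V) (q₁ : G.Walk s u) (q : G.Walk u v) (q₂ : G.Walk v t),
      p = q₁.append (q.append q₂) ∧
      (∀ e ∈ q₁.edges, e ∈ E.edgeSet) ∧ (∀ e ∈ q₂.edges, e ∈ E.edgeSet) ∧
      (∃ x, s(u, x) ∈ p.edges ∧ s(u, x) ∉ E.edgeSet) ∧
      ∃ y, s(v, y) ∈ p.edges ∧ s(v, y) ∉ E.edgeSet := by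
  obtain ⟨u, q₁, r, rfl, hq₁, x, hxr, hxE⟩ := exists_append_of_missing_edge E p hp
  obtain ⟨v, q₂, q, hr, hq₂, y, hyq, hyE⟩ :=
    exists_append_of_missing_edge E r.reverse ⟨_, by simpa using hxr, hxE⟩
  obtain rfl : r = q.reverse.append q₂.reverse := by
    rw [← r.reverse_reverse, hr, SimpleGraph.Walk.reverse_append]
  refine ⟨u, v, q₁, q.reverse, q₂.reverse, rfl, hq₁, ?_, ⟨x, ?_, hxE⟩, y, ?_, hyE⟩
  · simpa using hq₂
  · simpa using .inr (by simpa using hxr)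
  · simp [hyq]

lemma exists_mem_adj_and_weight_le_maxEdge (hN : ∀ v, IsLightNeighborSet G w d v (N v))
    {R : Finset V} (hR : ∀ v, (N v).card = d → ∃ a ∈ R, a ∈ N v)
    (p : G.Walk s t) {u x : V} (hx : s(u, x) ∈ p.edges)
    (hmissing : s(u, x) ∉ (lightGraph N).edgeSet) :
    ∃ a ∈ R, (lightGraph N).Adj u a ∧ w s(u, a) ≤ maxEdge G w p := by
  obtain ⟨hcard, hlight⟩ :=
    (hN u).heavy_of_not_lightGraph_adj (p.edges_subset_edgeSet hx) hmissing
  obtain ⟨a, haR, ha⟩ := hR u hcard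
  exact ⟨a, haR, (hN u).lightGraph_adj ha, (hlight a ha).trans (weight_le_maxEdge p hx)⟩

/-- Detour to light neighbours in `R` next to the first and the last missing edge of `p`, and
between them use that `H` preserves a walk which follows `p` and misses no further edges. -/
lemma gdist_le_walkWeight_add_of_sparse [Finite V]
    (hN : ∀ v, IsLightNeighborSet G w d v (N v)) (hH : lightGraph N ≤ H) {R : Finset V}
    (hR : ∀ v, (N v).card = d → ∃ a ∈ R, a ∈ N v)
    (hpreserve : ∀ a ∈ R, ∀ b ∈ R, ∀ q : G.Walk a b,
      (q.edgeSet \ (lightGraph N).edgeSet).ncard ≤ L → gdist H w a b ≤ walkWeight G w q)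
    (p : G.Walk s t) (hp : (p.edgeSet \ (lightGraph N).edgeSet).ncard ≤ L) :
    gdist H w s t ≤ walkWeight G w p + 4 * maxEdge G w p := by
  have hEH : (lightGraph N).edgeSet ⊆ H.edgeSet := SimpleGraph.edgeSet_mono hH
  by_cases hmissing : ∃ e ∈ p.edges, e ∉ (lightGraph N).edgeSet
  swap
  · push Not at hmissing
    exact (gdist_le_walkWeight_of_edges_subset p fun e he => hEH (hmissing e he)).trans
      le_self_add
  obtain ⟨u, v, q₁, q, q₂, hpq, hq₁, hq₂, ⟨x, hx, hxE⟩, y, hy, hyE⟩ :=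
    exists_append_append_of_missing_edge _ p hmissing
  obtain ⟨a, haR, hua, hwa⟩ := exists_mem_adj_and_weight_le_maxEdge hN hR p hx hxE
  obtain ⟨b, hbR, hvb, hwb⟩ := exists_mem_adj_and_weight_le_maxEdge hN hR p hy hyE
  set M := maxEdge G w p
  have hGE : lightGraph N ≤ G := lightGraph_le hN
  set detour : G.Walk a b := .cons (hGE hua).symm (q.append (hGE hvb).toWalk)
  have hdetour : gdist H w a b ≤ M + (walkWeight G w q + M) := by
    refine (hpreserve a haR b hbR detour (le_trans (Set.ncard_le_ncard ?_) hp)).trans ?_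
    · rintro e ⟨he, heE⟩
      refine ⟨?_, heE⟩
      have hmem : e = s(a, u) ∨ e ∈ q.edges ∨ e = s(v, b) := by simpa [detour] using he
      rcases hmem with rfl | he | rfl
      · exact absurd hua.symm heE
      · simp [hpq, he]
      · exact absurd hvb heE
    · rw [walkWeight_cons, walkWeight_append, Sym2.eq_swap]
      gcongr
      simpa using hwb
  calc gdist H w s t
      ≤ gdist H w s u + (gdist H w u a + (gdist H w a b + (gdist H w b v + gdist H w v t))) := by
        refine (gdist_triangle s u t).trans (add_le_add_right ?_ _)
        refine (gdist_triangle u a t).trans (add_le_add_right ?_ _)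
        exact (gdist_triangle a b t).trans (add_le_add_right (gdist_triangle b v t) _)
    _ ≤ walkWeight G w q₁ + (M + ((M + (walkWeight G w q + M)) + (M + walkWeight G w q₂))) := by
        rw [gdist_comm b v]
        gcongr
        · exact gdist_le_walkWeight_of_edges_subset _ fun e he => hEH (hq₁ e he)
        · exact (gdist_le_weight (hH hua)).trans hwa
        · exact (gdist_le_weight (hH hvb)).trans hwb
        · exact gdist_le_walkWeight_of_edges_subset _ fun e he => hEH (hq₂ e he)
    _ = walkWeight G w p + 4 * M := by
        rw [congrArg (walkWeight G w) hpq, walkWeight_append, walkWeight_append]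
        ring

end SparseWalks

section Spanner

variable {V : Type} [Fintype V] {G : SimpleGraph V} {w : Sym2 V → ℝ≥0∞} {d l m : ℕ}
  {N : V → Finset V}

lemma exists_tree_union_of_many_missing_edges [Nonempty V] (hw : PosWeights G w)
    {π : (s t : V) → G.Walk s t} (hπ : IsShortestPathScheme G w π)
    (hN : ∀ v, IsLightNeighborSet G w d v (N v))
    (hm : (Fintype.card V : ℝ) ^ 2 < Real.exp (↑(d * l) * m / Fintype.card V)) :
    ∃ H ≤ G, H.edgeSet.ncard ≤ m * Fintype.card V ∧
      ∀ s t, 3 * l ≤ ((π s t).edgeSet \ (lightGraph N).edgeSet).ncard →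
        gdist H w s t ≤ gdist G w s t + 2 * maxEdge G w (π s t) := by
  set F : Finset (V × V) :=
    {z | 3 * l ≤ ((π z.1 z.2).edgeSet \ (lightGraph N).edgeSet).ncard}
  have hF : F.card ≤ Fintype.card V ^ 2 := by
    simpa [sq] using Finset.card_le_univ F
  obtain ⟨R, hRm, hR⟩ := exists_hittingSet_of_card_lt_exp F (fun z => hubs w (π z.1 z.2))
    (fun z hz => IsShortest.mul_le_card_hubs (hπ z.1 z.2) hw hN (Finset.mem_filter.1 hz).2)
    (lt_of_le_of_lt (by exact_mod_cast hF) hm)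
  choose T hTG hTcard hT using fun r =>
    exists_shortestPathTree hw r fun v => ⟨π r v, hπ r v⟩
  refine ⟨R.sup T, Finset.sup_le fun r _ => hTG r, ?_, fun s t hst => ?_⟩
  · exact (ncard_edgeSet_finsetSup_le R T fun r _ => hTcard r).trans
      (Nat.mul_le_mul_right _ hRm)
  · obtain ⟨r, hrR, hr⟩ := hR (s, t) (by simpa [F] using hst)
    have htree (v : V) : gdist (R.sup T) w r v ≤ gdist G w r v :=
      (gdist_anti (Finset.le_sup hrR)).trans (hT r v)
    calc gdist (R.sup T) w s t ≤ gdist (R.sup T) w s r + gdist (R.sup T) w r t :=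
          gdist_triangle s r t
      _ ≤ gdist G w s r + gdist G w r t := by
          rw [gdist_comm s r, gdist_comm s r]
          exact add_le_add (htree s) (htree t)
      _ ≤ walkWeight G w (π s t) + 2 * maxEdge G w (π s t) := gdist_add_gdist_le_of_mem_hubs hr
      _ = gdist G w s t + 2 * maxEdge G w (π s t) := by rw [hπ s t]

lemma exists_preserver_union_of_few_missing_edges [Nonempty V] (L : ℕ)
    (hN : ∀ v, IsLightNeighborSet G w d v (N v))
    (hm : (Fintype.card V : ℝ) < Real.exp (d * m / Fintype.card V)) :
    ∃ H ≤ G, H.edgeSet.ncard ≤ m * m * L ∧ ∀ (s t : V) (p : G.Walk s t),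
      (p.edgeSet \ (lightGraph N).edgeSet).ncard ≤ L →
        gdist (lightGraph N ⊔ H) w s t ≤ walkWeight G w p + 4 * maxEdge G w p := by
  set F : Finset V := {v | (N v).card = d}
  have hF : F.card ≤ Fintype.card V := Finset.card_le_univ F
  obtain ⟨R, hRm, hR⟩ := exists_hittingSet_of_card_lt_exp F N
    (fun v hv => (Finset.mem_filter.1 hv).2.ge) (lt_of_le_of_lt (by exact_mod_cast hF) hm)
  choose B hBG hBcard hB using exists_sparse_preserver G (lightGraph N) w L
  refine ⟨(R ×ˢ R).sup fun z => B z.1 z.2, Finset.sup_le fun z _ => hBG z.1 z.2, ?_, fun s t p =>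
    gdist_le_walkWeight_add_of_sparse hN le_sup_left (R := R) (fun v hv => ?_) ?_ p⟩
  · refine (ncard_edgeSet_finsetSup_le _ _ fun z _ => hBcard z.1 z.2).trans ?_
    rw [Finset.card_product]
    gcongr
  · exact hR v (by simpa [F] using hv)
  · intro a ha b hb q hq
    have hab : B a b ≤ (R ×ˢ R).sup fun z => B z.1 z.2 :=
      Finset.le_sup (f := fun z : V × V => B z.1 z.2) (Finset.mk_mem_product ha hb)
    exact (gdist_anti (sup_le_sup_left hab _)).trans (hB a b q hq)

lemma exists_four_maxEdge_spanner [Nonempty V] (hw : PosWeights G w)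
    {π : (s t : V) → G.Walk s t} (hπ : IsShortestPathScheme G w π) {m₁ m₂ : ℕ}
    (hm₁ : (Fintype.card V : ℝ) ^ 2 < Real.exp (↑(d * l) * m₁ / Fintype.card V))
    (hm₂ : (Fintype.card V : ℝ) < Real.exp (d * m₂ / Fintype.card V)) :
    ∃ H ≤ G,
      H.edgeSet.ncard ≤ Fintype.card V * d + m₁ * Fintype.card V + m₂ * m₂ * (3 * l) ∧
      ∀ s t, gdist H w s t ≤ gdist G w s t + 4 * maxEdge G w (π s t) := by
  choose N hN using exists_isLightNeighborSet G w d
  obtain ⟨H₁, hH₁G, hH₁card, hH₁⟩ := exists_tree_union_of_many_missing_edges hw hπ hN hm₁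
  obtain ⟨H₂, hH₂G, hH₂card, hH₂⟩ :=
    exists_preserver_union_of_few_missing_edges (3 * l) hN hm₂
  refine ⟨lightGraph N ⊔ H₁ ⊔ H₂, sup_le (sup_le (lightGraph_le hN) hH₁G) hH₂G, ?_,
    fun s t => ?_⟩
  · rw [SimpleGraph.edgeSet_sup, SimpleGraph.edgeSet_sup]
    refine (Set.ncard_union_le _ _).trans (add_le_add ((Set.ncard_union_le _ _).trans ?_) hH₂card)
    exact add_le_add (ncard_edgeSet_lightGraph_le fun v => (hN v).card_le) hH₁card
  · rcases le_total (3 * l) ((π s t).edgeSet \ (lightGraph N).edgeSet).ncard with hlong | hshort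
    · calc gdist (lightGraph N ⊔ H₁ ⊔ H₂) w s t ≤ gdist H₁ w s t :=
            gdist_anti (le_sup_right.trans le_sup_left)
        _ ≤ gdist G w s t + 2 * maxEdge G w (π s t) := hH₁ s t hlong
        _ ≤ gdist G w s t + 4 * maxEdge G w (π s t) := by gcongr; norm_num
    · calc gdist (lightGraph N ⊔ H₁ ⊔ H₂) w s t ≤ gdist (lightGraph N ⊔ H₂) w s t :=
            gdist_anti (sup_le_sup_right le_sup_left _)
        _ ≤ walkWeight G w (π s t) + 4 * maxEdge G w (π s t) := hH₂ s t _ hshort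
        _ = gdist G w s t + 4 * maxEdge G w (π s t) := by rw [hπ s t]

end Spanner

section Parameters

/-- For `n = a ^ 5` vertices and `b = log n`, the left-hand side of the last inequality bounds the
number of edges of the spanner; the chosen values make each of its terms `O(a ^ 7 * b)`. -/
lemma exists_nat_parameters {a b : ℝ} (ha : 1 ≤ a) (hb : 1 / 2 ≤ b) :
    ∃ d l m₁ m₂ : ℕ, 3 * b * a ^ 5 ≤ d * l * m₁ ∧ 2 * b * a ^ 5 ≤ d * m₂ ∧
      a ^ 5 * d + m₁ * a ^ 5 + m₂ * m₂ * (3 * l) ≤ 206 * a ^ 7 * b := by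
  have ha₂ : 1 ≤ a ^ 2 := one_le_pow₀ ha
  have ha₃ : 1 ≤ a ^ 3 := one_le_pow₀ ha
  have hd : (⌈a ^ 2 * b⌉₊ : ℝ) ≤ 2 * (a ^ 2 * b) := Nat.ceil_le_two_mul (by nlinarith)
  have hl : (⌈a⌉₊ : ℝ) ≤ 2 * a := Nat.ceil_le_two_mul (by linarith)
  have hm₁ : (⌈3 * a ^ 2⌉₊ : ℝ) ≤ 2 * (3 * a ^ 2) := Nat.ceil_le_two_mul (by linarith)
  have hm₂ : (⌈2 * a ^ 3⌉₊ : ℝ) ≤ 2 * (2 * a ^ 3) := Nat.ceil_le_two_mul (by linarith)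
  refine ⟨⌈a ^ 2 * b⌉₊, ⌈a⌉₊, ⌈3 * a ^ 2⌉₊, ⌈2 * a ^ 3⌉₊, ?_, ?_, ?_⟩
  · calc 3 * b * a ^ 5 = (a ^ 2 * b) * a * (3 * a ^ 2) := by ring
      _ ≤ _ := by gcongr <;> exact Nat.le_ceil _
  · calc 2 * b * a ^ 5 = (a ^ 2 * b) * (2 * a ^ 3) := by ring
      _ ≤ _ := by gcongr <;> exact Nat.le_ceil _
  · calc a ^ 5 * ⌈a ^ 2 * b⌉₊ + ⌈3 * a ^ 2⌉₊ * a ^ 5 + ⌈2 * a ^ 3⌉₊ * ⌈2 * a ^ 3⌉₊ * (3 * ⌈a⌉₊)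
        ≤ a ^ 5 * (2 * (a ^ 2 * b)) + 2 * (3 * a ^ 2) * a ^ 5 +
            2 * (2 * a ^ 3) * (2 * (2 * a ^ 3)) * (3 * (2 * a)) := by gcongr
      _ = 2 * a ^ 7 * b + 204 * a ^ 7 * (1 / 2) := by ring
      _ ≤ 2 * a ^ 7 * b + 204 * a ^ 7 * b := by gcongr
      _ = 206 * a ^ 7 * b := by ring

lemma exists_spanner_parameters {n : ℕ} (hn : 2 ≤ n) :
    ∃ d l m₁ m₂ : ℕ,
      (n : ℝ) ^ 2 < Real.exp (↑(d * l) * m₁ / n) ∧ (n : ℝ) < Real.exp (d * m₂ / n) ∧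
      ((n * d + m₁ * n + m₂ * m₂ * (3 * l) : ℕ) : ℝ) ≤
        206 * (n : ℝ) ^ ((7 : ℝ) / 5) * Real.log n := by
  have hn2 : (2 : ℝ) ≤ n := by exact_mod_cast hn
  have hn0 : (0 : ℝ) < n := by linarith
  set a : ℝ := (n : ℝ) ^ ((1 : ℝ) / 5) with ha
  have ha5 : (n : ℝ) = a ^ 5 := by
    rw [ha, ← Real.rpow_natCast, ← Real.rpow_mul hn0.le]
    norm_num
  have ha7 : (n : ℝ) ^ ((7 : ℝ) / 5) = a ^ 7 := by
    rw [ha, ← Real.rpow_natCast, ← Real.rpow_mul hn0.le]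
    norm_num
  have ha1 : 1 ≤ a := Real.one_le_rpow (by linarith) (by norm_num)
  have hlog : 1 / 2 ≤ Real.log n := by
    linarith [Real.log_two_gt_d9, Real.log_le_log two_pos hn2]
  have hpow {c : ℕ} {x : ℝ} (h : c * Real.log n * a ^ 5 ≤ x) : (n : ℝ) ^ c ≤ Real.exp (x / n) := by
    rw [← Real.log_le_iff_le_exp (by positivity), Real.log_pow, le_div_iff₀ hn0]
    exact (congrArg (_ * ·) ha5).trans_le h
  obtain ⟨d, l, m₁, m₂, hlong, hshort, hcard⟩ := exists_nat_parameters ha1 hlog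
  refine ⟨d, l, m₁, m₂, ?_, ?_, ?_⟩
  · refine (pow_lt_pow_right₀ (by linarith) (by norm_num)).trans_le (hpow (c := 3) ?_)
    exact_mod_cast hlong
  · refine (lt_self_pow₀ (by linarith) (by norm_num)).trans_le (hpow (c := 2) ?_)
    exact_mod_cast hshort
  · push_cast
    rwa [← ha5, ← ha7] at hcard

end Parameters

/-- Every connected weighted graph `G` on `n` vertices admits a subgraph `H`
on at most `C·n^(7/5)·log n` edges (for a universal constant `C`) such that
`d_H(s,t) ≤ d_G(s,t) + 4·W(s,t)` for every pair of vertices `s, t`. -/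
theorem allpairs_four_W_spanner :
    ∃ C : ℝ, 0 < C ∧
      ∀ (V : Type) [Fintype V] (G : SimpleGraph V) (w : Sym2 V → ℝ≥0∞),
        G.Connected → PosWeights G w →
        ∀ π : (s t : V) → G.Walk s t, IsShortestPathScheme G w π →
          ∃ H : SimpleGraph V, H ≤ G ∧
            (H.edgeSet.ncard : ℝ) ≤
              C * (Fintype.card V : ℝ) ^ ((7 : ℝ) / 5) * Real.log (Fintype.card V) ∧
            ∀ s t : V,
              gdist H w s t ≤ gdist G w s t + 4 * maxEdge G w (π s t) := by
  refine ⟨206, by norm_num, fun V _ G w hG hw π hπ => ?_⟩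
  have := hG.nonempty
  rcases le_or_gt (Fintype.card V) 1 with hcard | hcard
  · have := Fintype.card_le_one_iff_subsingleton.1 hcard
    refine ⟨G, le_rfl, ?_, fun s t => le_self_add⟩
    rw [Subsingleton.elim G ⊥, SimpleGraph.edgeSet_bot, Set.ncard_empty, Nat.cast_zero]
    positivity
  · obtain ⟨d, l, m₁, m₂, hm₁, hm₂, hle⟩ := exists_spanner_parameters hcard
    obtain ⟨H, hHG, hHcard, hH⟩ := exists_four_maxEdge_spanner hw hπ hm₁ hm₂
    exact ⟨H, hHG, (Nat.cast_le.2 hHcard).trans hle, hH⟩
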